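/- (Bailey transformation for {}_{10}E_9.) Let s, c_0, c_1, c_2, c_3, d_0, d_1, d_2 ∈ ℂ satisfy c_0 + c_1 + c_2 + c_3 + d_0 + d_1 + d_2 = 2δ + 3s and d_2 = −Nδ for some N ∈ ℕ. Set s̃ = d_1 + d_2 − d_0, d̃_0 = d_1 + d_2 − s, and c̃_k = δ + s − d_0 − c_k for k = 0, 1, 2, 3. Then, for generic parameters (all brackets appearing in denominators nonzero): {}_{10}E_9( s; c_0, c_1, c_2, c_3, d_0, d_1, d_2 ) = ( [d_0]_N [δ+s]_N / ([d_0−d_1]_N [δ+s−d_1]_N) ) · ∏_{k=0}^{3} [δ+s−c_k−d_1]_N/[δ+s−c_k]_N · {}_{10}E_9( s̃; c̃_0, c̃_1, c̃_2, c̃_3, d̃_0, d_1, d_2 ). -/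

import Mathlib

/-!
The proof rests on the Frenkel–Turaev summation of the balanced terminating `₈E₇`
(`frenkel_turaev`), proved by induction on its length: the terms satisfy a contiguous relation
expressing the series of length `n + 1` through two series of length `n` (`ftTerm_succ`), and the
closed form satisfies the same relation (`ftValue_succ`). Each relation is an instance of the
Riemann relation.

An elementary transformation of the balanced `₁₀E₉(a; b, c, d, e, g, h, -nδ)`
(`bailey_elementary`) follows by Bailey's double-sum argument. The part of the summand depending on
`b, c, d` is expanded by the Frenkel–Turaev formula with base `l = δ + 2a - b - c - d`, the two
sums are interchanged, and the inner sum is again a Frenkel–Turaev sum. The result is a `₁₀E₉`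
based at `l`, with `b, c, d` shifted by `l - a` and `e, g, h` unchanged.

Both sides of the theorem reach the same series based at `l = δ + 2s - c₀ - c₁ - d₀` in this way:
the left side by transforming the triple `c₀, c₁, d₀`, the right side by transforming
`c̃₂, c̃₃, d̃₀`. Comparison of the prefactors gives the theorem for parameters at which every
bracket in the double sums is nonzero (`bailey_generic`).

The hypotheses of the theorem only exclude zeros of the denominators of the two final series and
of the prefactor. The parameters are therefore moved along a complex line preserving the balancing
condition. By the identity theorem and Baire's theorem the generic identity holds for a dense set
of values of the line parameter, and both sides are continuous at the original parameters.
-/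

open Finset

/-- Shifted factorial `[x]_k = [x][x+δ]⋯[x+(k-1)δ]` with respect to the bracket `f`. -/
noncomputable def sf (f : ℂ → ℂ) (δ : ℂ) (x : ℂ) (k : ℕ) : ℂ :=
  ∏ i ∈ Finset.range k, f (x + (i : ℂ) * δ)

/-- Difference product `Δ(x) = ∏_{i<j} [x_i - x_j]`. -/
noncomputable def Del (f : ℂ → ℂ) {m : ℕ} (x : Fin m → ℂ) : ℂ :=
  ∏ i : Fin m, ∏ j ∈ Finset.univ.filter (fun j => i < j), f (x i - x j)

/-- The multiple hypergeometric series `Φ^{m,n}_N(a; x | b; c)`. -/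
noncomputable def Phi (f : ℂ → ℂ) (δ : ℂ) {m n : ℕ} (a x : Fin m → ℂ)
    (b c : Fin n → ℂ) (N : ℕ) : ℂ :=
  ∑ μ ∈ Finset.Nat.antidiagonalTuple m N,
    (Del f (fun i => x i + (μ i : ℂ) * δ) / Del f x)
      * (∏ i, ∏ j, sf f δ (x i - x j + a j) (μ i) / sf f δ (x i - x j + δ) (μ i))
      * (∏ i, ∏ k, sf f δ (x i + b k) (μ i) / sf f δ (x i + c k) (μ i))

/-- The `μ`-th summand of the very well-poised series `E^{m,n}(a; x | s; u; v)`. -/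
noncomputable def Eterm (f : ℂ → ℂ) (δ : ℂ) {m n : ℕ} (a x : Fin m → ℂ) (s : ℂ)
    (u v : Fin n → ℂ) (μ : Fin m → ℕ) : ℂ :=
  (Del f (fun i => x i + (μ i : ℂ) * δ) / Del f x)
    * (∏ i, f (x i + s + (((∑ j, μ j) + μ i : ℕ) : ℂ) * δ) / f (x i + s))
    * (∏ j, (sf f δ (s + x j) (∑ i, μ i) / sf f δ (δ + s + x j - a j) (∑ i, μ i))
        * ∏ i, sf f δ (x i - x j + a j) (μ i) / sf f δ (x i - x j + δ) (μ i))
    * (∏ k, (sf f δ (v k) (∑ i, μ i) / sf f δ (δ + s - u k) (∑ i, μ i))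
        * ∏ i, sf f δ (x i + u k) (μ i) / sf f δ (x i + δ + s - v k) (μ i))

/-- The very well-poised multiple series `E^{m,n}(a; x | s; u; v)`. -/
noncomputable def Evw (f : ℂ → ℂ) (δ : ℂ) {m n : ℕ} (a x : Fin m → ℂ) (s : ℂ)
    (u v : Fin n → ℂ) : ℂ :=
  ∑' μ : Fin m → ℕ, Eterm f δ a x s u v μ

/-- The one-dimensional very well-poised series `_{r+3}E_{r+2}(s; u_1, …, u_r)`. -/
noncomputable def E1 (f : ℂ → ℂ) (δ : ℂ) {r : ℕ} (s : ℂ) (u : Fin r → ℂ) : ℂ :=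
  ∑' k : ℕ, (f (s + 2 * (k : ℂ) * δ) / f s) * (sf f δ s k / sf f δ δ k)
    * ∏ i, sf f δ (u i) k / sf f δ (δ + s - u i) k

/-! ### Shifted factorials and well-poised factors -/

section Bracket

variable {f : ℂ → ℂ} {δ : ℂ}

/-- `x` avoids the zeros of the bracket along the whole lattice line `x + ℤδ`. -/
def NZ (f : ℂ → ℂ) (δ x : ℂ) : Prop := ∀ k : ℤ, f (x + (k : ℂ) * δ) ≠ 0

/-- The well-poised factor `[u]_k / [δ + a - u]_k`. -/
noncomputable def wp (f : ℂ → ℂ) (δ a u : ℂ) (k : ℕ) : ℂ :=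
  sf f δ u k / sf f δ (δ + a - u) k

/-- The very-well-poised factor `[a + 2kδ]/[a] · [a]_k/[δ]_k`. -/
noncomputable def vwp (f : ℂ → ℂ) (δ a : ℂ) (k : ℕ) : ℂ :=
  f (a + 2 * (k : ℂ) * δ) / f a * (sf f δ a k / sf f δ δ k)

lemma NZ.at {x y : ℂ} (h : NZ f δ x) (k : ℤ) (hy : y = x + (k : ℂ) * δ) : f y ≠ 0 := by
  rw [hy]; exact h k

lemma NZ.shift {x y : ℂ} (h : NZ f δ x) (k : ℤ) (hy : y = x + (k : ℂ) * δ) : NZ f δ y := by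
  intro l
  have := h (k + l)
  rw [hy]
  convert this using 2
  push_cast; ring

lemma NZ.neg (hodd : ∀ t : ℂ, f (-t) = -f t) {x : ℂ} (h : NZ f δ x) : NZ f δ (-x) := by
  intro l
  have := h (-l)
  have e : -x + (l : ℂ) * δ = -(x + ((-l : ℤ) : ℂ) * δ) := by push_cast; ring
  rw [e, hodd]
  exact neg_ne_zero.2 this

lemma sf_zero (x : ℂ) : sf f δ x 0 = 1 := by simp [sf]

lemma sf_succ (x : ℂ) (k : ℕ) : sf f δ x (k + 1) = sf f δ x k * f (x + (k : ℂ) * δ) := by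
  simp [sf, Finset.prod_range_succ]

lemma sf_add (x : ℂ) (j k : ℕ) :
    sf f δ x (j + k) = sf f δ x j * sf f δ (x + (j : ℂ) * δ) k := by
  simp only [sf, Finset.prod_range_add]
  congr 1
  refine Finset.prod_congr rfl fun i _ => ?_
  congr 1; push_cast; ring

lemma sf_succ' (x : ℂ) (k : ℕ) : sf f δ x (k + 1) = f x * sf f δ (x + δ) k := by
  rw [add_comm k 1, sf_add]
  simp [sf]

/-- Reversal of the order of the factors. -/
lemma sf_reflect (hodd : ∀ t : ℂ, f (-t) = -f t) (x y : ℂ) (k : ℕ)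
    (h : x + y = (1 - (k : ℂ)) * δ) : sf f δ x k = (-1) ^ k * sf f δ y k := by
  unfold sf
  rw [← Finset.prod_range_reflect]
  have : ∀ i ∈ Finset.range k, f (x + ((k - 1 - i : ℕ) : ℂ) * δ) = (-1) * f (y + (i : ℂ) * δ) := by
    intro i hi
    have hi' : i + 1 ≤ k := Finset.mem_range.1 hi
    have e : ((k - 1 - i : ℕ) : ℂ) = (k : ℂ) - 1 - i := by
      rw [Nat.sub_sub, Nat.cast_sub (by omega)]; push_cast; ring
    rw [e, neg_one_mul, ← hodd]
    congr 1
    linear_combination h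
  rw [Finset.prod_congr rfl this, Finset.prod_mul_distrib]
  simp

lemma sf_ne_zero {x : ℂ} {k : ℕ} (h : ∀ l : ℕ, l < k → f (x + (l : ℂ) * δ) ≠ 0) :
    sf f δ x k ≠ 0 :=
  Finset.prod_ne_zero_iff.2 fun i hi => h i (Finset.mem_range.1 hi)

lemma NZ.sf {x y : ℂ} (h : NZ f δ x) (k : ℤ) (hy : y = x + (k : ℂ) * δ) (n : ℕ) :
    sf f δ y n ≠ 0 :=
  sf_ne_zero fun l _ => by simpa using (h.shift k hy) (l : ℤ)

lemma sf_delta_ne_zero (hδ : ∀ k : ℤ, k ≠ 0 → f ((k : ℂ) * δ) ≠ 0) (n : ℕ) :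
    sf f δ δ n ≠ 0 :=
  sf_ne_zero fun l _ => by
    have := hδ (l + 1) (by omega)
    convert this using 2
    push_cast; ring

lemma sf_neg_eq_zero (hodd : ∀ t : ℂ, f (-t) = -f t) {n k : ℕ} (h : n < k) :
    sf f δ (-(n : ℂ) * δ) k = 0 := by
  refine Finset.prod_eq_zero (Finset.mem_range.2 h) ?_
  have h0 : f 0 = 0 := by
    have := hodd 0
    rw [neg_zero] at this
    exact self_eq_neg.1 this
  rw [← h0]; congr 1; ring

lemma wp_zero (a u : ℂ) : wp f δ a u 0 = 1 := by simp [wp, sf_zero]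

lemma vwp_zero {a : ℂ} (ha : NZ f δ a) : vwp f δ a 0 = 1 := by
  have := ha.at 0 (y := a) (by simp)
  simp [vwp, sf_zero, this]

/-! ### The Frenkel–Turaev summation -/

lemma wp_shift {a a' u u' : ℂ} (ha : a' = a + 2 * δ) (hu : u' = u + δ) (k : ℕ) :
    wp f δ a u (k + 1) = f u / f (δ + a - u) * wp f δ a' u' k := by
  subst ha hu
  unfold wp
  rw [sf_succ', sf_succ', show δ + a - u + δ = δ + (a + 2 * δ) - (u + δ) by ring]
  rw [mul_div_mul_comm]

lemma wp_shift' {a a' e : ℂ} (ha : a' = a + 2 * δ) (he : NZ f δ (a - e)) (k : ℕ) :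
    wp f δ a e (k + 1) = wp f δ a' e k *
      (f (e + (k : ℂ) * δ) * f (2 * δ + a - e + (k : ℂ) * δ) /
        (f (δ + a - e) * f (2 * δ + a - e))) := by
  subst ha
  unfold wp
  have h1 : f (2 * δ + a - e) ≠ 0 := he.at 2 (by push_cast; ring)
  have h0 : f (δ + a - e) ≠ 0 := he.at 1 (by push_cast; ring)
  have h2 : f (2 * δ + a - e + (k : ℂ) * δ) ≠ 0 := he.at (k + 2) (by push_cast; ring)
  have h3 := he.sf 3 (y := δ + (a + 2 * δ) - e) (by push_cast; ring) k
  have h4 := he.sf 2 (y := 2 * δ + a - e) (by push_cast; ring) k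
  have key := sf_succ' (f := f) (δ := δ) (2 * δ + a - e) k
  rw [sf_succ, show 2 * δ + a - e + δ = δ + (a + 2 * δ) - e by ring] at key
  rw [sf_succ, sf_succ', show δ + a - e + δ = 2 * δ + a - e by ring]
  clear he
  generalize f (2 * δ + a - e) = x0 at *
  generalize f (δ + a - e) = x1 at *
  generalize f (2 * δ + a - e + (k : ℂ) * δ) = x2 at *
  generalize sf f δ (δ + (a + 2 * δ) - e) k = x3 at *
  generalize sf f δ (2 * δ + a - e) k = x4 at *
  field_simp
  linear_combination -(sf f δ e k * f (e + k * δ)) * key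

lemma vwp_shift (hδ : ∀ k : ℤ, k ≠ 0 → f ((k : ℂ) * δ) ≠ 0) {a a' : ℂ} (ha' : a' = a + 2 * δ)
    (ha : NZ f δ a) (k : ℕ) :
    vwp f δ a (k + 1) = vwp f δ a' k *
      (f (δ + a) * f (2 * δ + a) / (f (a + δ + (k : ℂ) * δ) * f (δ + (k : ℂ) * δ))) := by
  subst ha'
  unfold vwp
  have h0 : f a ≠ 0 := ha.at 0 (by push_cast; ring)
  have h1 : f (a + δ) ≠ 0 := ha.at 1 (by push_cast; ring)
  have h2 : f (a + 2 * δ) ≠ 0 := ha.at 2 (by push_cast; ring)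
  have h3 : f (a + δ + (k : ℂ) * δ) ≠ 0 := ha.at (k + 1) (by push_cast; ring)
  have h4 := sf_delta_ne_zero hδ k
  have h5 : f (δ + (k : ℂ) * δ) ≠ 0 := by
    have := hδ (k + 1) (by omega)
    convert this using 2
    push_cast; ring
  have key := sf_succ' (f := f) (δ := δ) (a + δ) k
  rw [sf_succ, show a + δ + δ = a + 2 * δ by ring] at key
  rw [sf_succ' a, sf_succ δ, show a + 2 * ((k + 1 : ℕ) : ℂ) * δ = a + 2 * δ + 2 * (k : ℂ) * δ by
    push_cast; ring, show δ + a = a + δ by ring, show 2 * δ + a = a + 2 * δ by ring]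
  clear hδ ha
  generalize f (a + 2 * δ + 2 * (k : ℂ) * δ) = x0 at *
  generalize f (a + δ + (k : ℂ) * δ) = x1 at *
  generalize f (δ + (k : ℂ) * δ) = x2 at *
  generalize f (a + 2 * δ) = x3 at *
  generalize f (a + δ) = x4 at *
  generalize sf f δ (a + δ) k = x5 at *
  generalize sf f δ (a + 2 * δ) k = x6 at *
  field_simp
  linear_combination x0 * key

/-- The `k`-th term of the terminating series `₈E₇(a; b, c, d, e, -nδ)`. -/
noncomputable def ftTerm (f : ℂ → ℂ) (δ a b c d e : ℂ) (n k : ℕ) : ℂ :=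
  vwp f δ a k * wp f δ a b k * wp f δ a c k * wp f δ a d k * wp f δ a e k
    * wp f δ a (-(n : ℂ) * δ) k

/-- The value of the balanced `₈E₇(a; b, c, d, e, -nδ)`; balancing determines `e` from the other
parameters. -/
noncomputable def ftValue (f : ℂ → ℂ) (δ a b c d : ℂ) (n : ℕ) : ℂ :=
  sf f δ (δ + a) n * sf f δ (δ + a - b - c) n * sf f δ (δ + a - b - d) n
      * sf f δ (δ + a - c - d) n
    / (sf f δ (δ + a - b) n * sf f δ (δ + a - c) n * sf f δ (δ + a - d) n
      * sf f δ (δ + a - b - c - d) n)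

/-- The factor multiplying the shifted series in the contiguous relation for `₈E₇`. -/
noncomputable def ftCoeff (f : ℂ → ℂ) (δ a b c d e : ℂ) (n : ℕ) : ℂ :=
  -(f (e + (n : ℂ) * δ) * f (2 * δ + a - e + (n : ℂ) * δ) * f (δ + a) * f (2 * δ + a)
      * (f b * f c * f d))
    / (f (δ + a - b) * f (δ + a - c) * f (δ + a - d) * f (δ + a - e) * f (2 * δ + a - e)
      * f (δ + a + (n : ℂ) * δ) * f (2 * δ + a + (n : ℂ) * δ))

/-- Contiguous relation between the terms of three `₈E₇` series. After division by the common
factors it is one instance of the Riemann relation. -/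
lemma ftTerm_succ (hodd : ∀ t : ℂ, f (-t) = -f t)
    (hRiem : ∀ x y u v : ℂ,
      f (x + y) * f (x - y) * f (u + v) * f (u - v) =
        f (x + u) * f (x - u) * f (y + v) * f (y - v)
          - f (x + v) * f (x - v) * f (y + u) * f (y - u))
    (hδ : ∀ k : ℤ, k ≠ 0 → f ((k : ℂ) * δ) ≠ 0) {a b c d e : ℂ} (n k : ℕ)
    (ha : NZ f δ a) (he : NZ f δ (a - e)) :
    ftTerm f δ a b c d e (n + 1) (k + 1) = ftTerm f δ a b c d (e - δ) n (k + 1)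
      + ftCoeff f δ a b c d e n
        * ftTerm f δ (a + 2 * δ) (b + δ) (c + δ) (d + δ) e n k := by
  unfold ftTerm ftCoeff
  have hn : NZ f δ (a - -(n : ℂ) * δ) := ha.shift n (by push_cast; ring)
  rw [vwp_shift hδ rfl ha, wp_shift (u := b) rfl rfl, wp_shift (u := c) rfl rfl,
    wp_shift (u := d) rfl rfl, wp_shift' (e := e) rfl he, wp_shift' rfl hn,
    wp_shift (u := e - δ) (u' := e) rfl (by ring),
    wp_shift (u := -((n + 1 : ℕ) : ℂ) * δ) (u' := -(n : ℂ) * δ) rfl (by push_cast; ring)]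
  have h1 : f (a + δ + (k : ℂ) * δ) ≠ 0 := ha.at (k + 1) (by push_cast; ring)
  have h2 : f (δ + (k : ℂ) * δ) ≠ 0 := by
    have := hδ (k + 1) (by omega)
    convert this using 2
    push_cast; ring
  have h3 : f (δ + a - e) ≠ 0 := he.at 1 (by push_cast; ring)
  have h4 : f (2 * δ + a - e) ≠ 0 := he.at 2 (by push_cast; ring)
  have h5 : f (δ + a + (n : ℂ) * δ) ≠ 0 := ha.at (n + 1) (by push_cast; ring)
  have h6 : f (2 * δ + a + (n : ℂ) * δ) ≠ 0 := ha.at (n + 2) (by push_cast; ring)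
  rw [show δ + a - -(n : ℂ) * δ = δ + a + (n : ℂ) * δ by ring,
    show 2 * δ + a - -(n : ℂ) * δ = 2 * δ + a + (n : ℂ) * δ by ring,
    show δ + a - -((n + 1 : ℕ) : ℂ) * δ = 2 * δ + a + (n : ℂ) * δ by push_cast; ring,
    show δ + a - (e - δ) = 2 * δ + a - e by ring,
    show -((n + 1 : ℕ) : ℂ) * δ = -(δ + (n : ℂ) * δ) by push_cast; ring, hodd]
  -- with `x = (k+1)δ + a/2` and `y = (n+1)δ + a/2` the halves of `a` cancel in every bracket
  have R := hRiem ((k + 1 : ℂ) * δ + a / 2) ((n + 1 : ℂ) * δ + a / 2) (e - δ - a / 2) (a / 2)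
  rw [show (k + 1 : ℂ) * δ + a / 2 + ((n + 1 : ℂ) * δ + a / 2)
        = 2 * δ + a + (n : ℂ) * δ + (k : ℂ) * δ by ring,
    show (k + 1 : ℂ) * δ + a / 2 - ((n + 1 : ℂ) * δ + a / 2) = -(n : ℂ) * δ + (k : ℂ) * δ by ring,
    show e - δ - a / 2 + a / 2 = e - δ by ring,
    show e - δ - a / 2 - a / 2 = -(δ + a - e) by ring,
    show (k + 1 : ℂ) * δ + a / 2 + (e - δ - a / 2) = e + (k : ℂ) * δ by ring,
    show (k + 1 : ℂ) * δ + a / 2 - (e - δ - a / 2) = 2 * δ + a - e + (k : ℂ) * δ by ring,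
    show (n + 1 : ℂ) * δ + a / 2 + a / 2 = δ + a + (n : ℂ) * δ by ring,
    show (n + 1 : ℂ) * δ + a / 2 - a / 2 = δ + (n : ℂ) * δ by ring,
    show (k + 1 : ℂ) * δ + a / 2 + a / 2 = a + δ + (k : ℂ) * δ by ring,
    show (k + 1 : ℂ) * δ + a / 2 - a / 2 = δ + (k : ℂ) * δ by ring,
    show (n + 1 : ℂ) * δ + a / 2 + (e - δ - a / 2) = e + (n : ℂ) * δ by ring,
    show (n + 1 : ℂ) * δ + a / 2 - (e - δ - a / 2) = 2 * δ + a - e + (n : ℂ) * δ by ring,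
    hodd] at R
  generalize wp f δ (a + 2 * δ) (b + δ) k = wb
  generalize wp f δ (a + 2 * δ) (c + δ) k = wc
  generalize wp f δ (a + 2 * δ) (d + δ) k = wd
  generalize wp f δ (a + 2 * δ) e k = we
  generalize wp f δ (a + 2 * δ) (-(n : ℂ) * δ) k = wn
  generalize vwp f δ (a + 2 * δ) k = w
  -- the identity left after division by the `b`, `c`, `d` factors, common to all three terms
  have key : f (e + (k : ℂ) * δ) * f (2 * δ + a - e + (k : ℂ) * δ)
        / (f (δ + a - e) * f (2 * δ + a - e))
        * (-f (δ + (n : ℂ) * δ) / f (2 * δ + a + (n : ℂ) * δ))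
        / (f (a + δ + (k : ℂ) * δ) * f (δ + (k : ℂ) * δ))
      = f (e - δ) / f (2 * δ + a - e)
        * (f (-(n : ℂ) * δ + (k : ℂ) * δ) * f (2 * δ + a + (n : ℂ) * δ + (k : ℂ) * δ)
          / (f (δ + a + (n : ℂ) * δ) * f (2 * δ + a + (n : ℂ) * δ)))
        / (f (a + δ + (k : ℂ) * δ) * f (δ + (k : ℂ) * δ))
        - f (e + (n : ℂ) * δ) * f (2 * δ + a - e + (n : ℂ) * δ)
        / (f (δ + a - e) * f (2 * δ + a - e)
          * f (δ + a + (n : ℂ) * δ) * f (2 * δ + a + (n : ℂ) * δ)) := by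
    clear hRiem hodd hδ ha he hn
    generalize f (2 * δ + a + (n : ℂ) * δ + (k : ℂ) * δ) = x0 at *
    generalize f (-(n : ℂ) * δ + (k : ℂ) * δ) = x1 at *
    generalize f (e - δ) = x2 at *
    generalize f (δ + a - e) = x3 at *
    generalize f (2 * δ + a - e + (k : ℂ) * δ) = x4 at *
    generalize f (e + (k : ℂ) * δ) = x5 at *
    generalize f (δ + a + (n : ℂ) * δ) = x6 at *
    generalize f (δ + (n : ℂ) * δ) = x7 at *
    generalize f (a + δ + (k : ℂ) * δ) = x8 at *
    generalize f (δ + (k : ℂ) * δ) = x9 at *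
    generalize f (e + (n : ℂ) * δ) = x10 at *
    generalize f (2 * δ + a - e + (n : ℂ) * δ) = x11 at *
    generalize f (2 * δ + a + (n : ℂ) * δ) = x12 at *
    generalize f (2 * δ + a - e) = x13 at *
    field_simp
    linear_combination R
  linear_combination (w * wb * wc * wd * we * wn * f (δ + a) * f (2 * δ + a)
    * (f b / f (δ + a - b)) * (f c / f (δ + a - c)) * (f d / f (δ + a - d))) * key

/-- The closed-form values satisfy the same contiguous relation as the terms, by another instance
of the Riemann relation. -/
lemma ftValue_succ (hodd : ∀ t : ℂ, f (-t) = -f t)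
    (hRiem : ∀ x y u v : ℂ,
      f (x + y) * f (x - y) * f (u + v) * f (u - v) =
        f (x + u) * f (x - u) * f (y + v) * f (y - v)
          - f (x + v) * f (x - v) * f (y + u) * f (y - u))
    {a b c d e : ℂ} (n : ℕ)
    (hbal : b + c + d + e = ((n + 1 : ℕ) + 1 : ℂ) * δ + 2 * a)
    (ha : NZ f δ a) (hb : NZ f δ (a - b)) (hc : NZ f δ (a - c)) (hd : NZ f δ (a - d))
    (he : NZ f δ (a - e)) :
    ftValue f δ a b c d (n + 1) = ftValue f δ a b c d n
      + ftCoeff f δ a b c d e n * ftValue f δ (a + 2 * δ) (b + δ) (c + δ) (d + δ) n := by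
  have hm : NZ f δ (a - b - c - d) :=
    (he.neg hodd).shift (-n - 2) (by push_cast at hbal ⊢; linear_combination -hbal)
  -- `[x + 2δ]_n` in terms of `[x]_n`, and likewise for the other shifts
  have s1 : sf f δ (δ + (a + 2 * δ)) n
      = sf f δ (δ + a) n * (f (δ + a + (n : ℂ) * δ) * f (2 * δ + a + (n : ℂ) * δ))
        / (f (δ + a) * f (2 * δ + a)) := by
    have h1 : f (δ + a) ≠ 0 := ha.at 1 (by push_cast; ring)
    have h2 : f (2 * δ + a) ≠ 0 := ha.at 2 (by push_cast; ring)
    have k1 := sf_succ' (f := f) (δ := δ) (δ + a) n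
    have k2 := sf_succ' (f := f) (δ := δ) (2 * δ + a) n
    rw [sf_succ, show δ + a + δ = 2 * δ + a by ring] at k1
    rw [sf_succ, show 2 * δ + a + δ = δ + (a + 2 * δ) by ring] at k2
    rw [eq_div_iff (mul_ne_zero h1 h2)]
    linear_combination -(f (δ + a)) * k2 - f (2 * δ + a + n * δ) * k1
  have s2 : ∀ u : ℂ, NZ f δ (a - u) → sf f δ (δ + (a + 2 * δ) - (u + δ)) n
      = sf f δ (δ + a - u) n * f (δ + a - u + (n : ℂ) * δ) / f (δ + a - u) := by
    intro u hu
    have h1 : f (δ + a - u) ≠ 0 := hu.at 1 (by push_cast; ring)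
    have k1 := sf_succ' (f := f) (δ := δ) (δ + a - u) n
    rw [sf_succ, show δ + a - u + δ = δ + (a + 2 * δ) - (u + δ) by ring] at k1
    rw [eq_div_iff h1]
    linear_combination -k1
  have s3 : sf f δ (δ + (a + 2 * δ) - (b + δ) - (c + δ) - (d + δ)) n
      = sf f δ (δ + a - b - c - d) n * f (a - b - c - d)
        / f (a - b - c - d + (n : ℂ) * δ) := by
    have h1 : f (a - b - c - d + (n : ℂ) * δ) ≠ 0 := hm.at n (by push_cast; ring)
    have k1 := sf_succ' (f := f) (δ := δ) (a - b - c - d) n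
    rw [sf_succ, show a - b - c - d + δ = δ + a - b - c - d by ring] at k1
    rw [show δ + (a + 2 * δ) - (b + δ) - (c + δ) - (d + δ) = a - b - c - d by ring]
    rw [eq_div_iff h1]
    linear_combination k1
  have R := hRiem (δ + a + n * δ - (b + c) / 2) (δ + a + n * δ - d - (b + c) / 2)
    ((b + c) / 2) ((c - b) / 2)
  rw [show δ + a + n * δ - (b + c) / 2 + (δ + a + n * δ - d - (b + c) / 2) = e + n * δ by
      push_cast at hbal; linear_combination -hbal,
    show δ + a + n * δ - (b + c) / 2 - (δ + a + n * δ - d - (b + c) / 2) = d by ring,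
    show (b + c) / 2 + (c - b) / 2 = c by ring,
    show (b + c) / 2 - (c - b) / 2 = b by ring,
    show δ + a + n * δ - (b + c) / 2 + (b + c) / 2 = δ + a + n * δ by ring,
    show δ + a + n * δ - (b + c) / 2 - (b + c) / 2 = δ + a - b - c + n * δ by ring,
    show δ + a + n * δ - d - (b + c) / 2 + (c - b) / 2 = δ + a - b - d + n * δ by ring,
    show δ + a + n * δ - d - (b + c) / 2 - (c - b) / 2 = δ + a - c - d + n * δ by ring,
    show δ + a + n * δ - (b + c) / 2 + (c - b) / 2 = δ + a - b + n * δ by ring,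
    show δ + a + n * δ - (b + c) / 2 - (c - b) / 2 = δ + a - c + n * δ by ring,
    show δ + a + n * δ - d - (b + c) / 2 + (b + c) / 2 = δ + a - d + n * δ by ring,
    show δ + a + n * δ - d - (b + c) / 2 - (b + c) / 2 = δ + a - b - c - d + n * δ by ring] at R
  unfold ftValue ftCoeff
  rw [s1, s2 b hb, s2 c hc, s2 d hd, s3]
  simp only [sf_succ]
  rw [show δ + (a + 2 * δ) - (b + δ) - (c + δ) = δ + a - b - c by ring,
    show δ + (a + 2 * δ) - (b + δ) - (d + δ) = δ + a - b - d by ring,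
    show δ + (a + 2 * δ) - (c + δ) - (d + δ) = δ + a - c - d by ring,
    show 2 * δ + a - e + n * δ = -(a - b - c - d) by push_cast at hbal; linear_combination -hbal,
    show δ + a - e = -(δ + a - b - c - d + n * δ) by push_cast at hbal; linear_combination -hbal,
    show 2 * δ + a - e = -(a - b - c - d + n * δ) by push_cast at hbal; linear_combination -hbal,
    hodd, hodd, hodd]
  have n1 : f (δ + a) ≠ 0 := ha.at 1 (by push_cast; ring)
  have n2 : f (2 * δ + a) ≠ 0 := ha.at 2 (by push_cast; ring)
  have n3 : f (δ + a + n * δ) ≠ 0 := ha.at (n + 1) (by push_cast; ring)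
  have n4 : f (2 * δ + a + n * δ) ≠ 0 := ha.at (n + 2) (by push_cast; ring)
  have n5 : f (δ + a - b) ≠ 0 := hb.at 1 (by push_cast; ring)
  have n6 : f (δ + a - c) ≠ 0 := hc.at 1 (by push_cast; ring)
  have n7 : f (δ + a - d) ≠ 0 := hd.at 1 (by push_cast; ring)
  have n8 : f (δ + a - b + n * δ) ≠ 0 := hb.at (n + 1) (by push_cast; ring)
  have n9 : f (δ + a - c + n * δ) ≠ 0 := hc.at (n + 1) (by push_cast; ring)
  have n10 : f (δ + a - d + n * δ) ≠ 0 := hd.at (n + 1) (by push_cast; ring)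
  have n11 : f (a - b - c - d) ≠ 0 := hm.at 0 (by push_cast; ring)
  have n12 : f (a - b - c - d + n * δ) ≠ 0 := hm.at n (by push_cast; ring)
  have n13 : f (δ + a - b - c - d + n * δ) ≠ 0 := hm.at (n + 1) (by push_cast; ring)
  have m1 := hb.sf 1 (y := δ + a - b) (by push_cast; ring) n
  have m2 := hc.sf 1 (y := δ + a - c) (by push_cast; ring) n
  have m3 := hd.sf 1 (y := δ + a - d) (by push_cast; ring) n
  have m4 := hm.sf 1 (y := δ + a - b - c - d) (by push_cast; ring) n
  clear hRiem hodd ha hb hc hd he hm s1 s2 s3 hbal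
  generalize f (e + (n : ℂ) * δ) = x0 at *
  generalize f (δ + a + (n : ℂ) * δ) = x1 at *
  generalize f (2 * δ + a + (n : ℂ) * δ) = x2 at *
  generalize f (δ + a - b - c - d + (n : ℂ) * δ) = x3 at *
  generalize f (a - b - c - d + (n : ℂ) * δ) = x4 at *
  generalize f (δ + a - b + (n : ℂ) * δ) = x5 at *
  generalize f (δ + a - c + (n : ℂ) * δ) = x6 at *
  generalize f (δ + a - d + (n : ℂ) * δ) = x7 at *
  generalize f (δ + a - b - c + (n : ℂ) * δ) = x8 at *
  generalize f (δ + a - b - d + (n : ℂ) * δ) = x9 at *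
  generalize f (δ + a - c - d + (n : ℂ) * δ) = x10 at *
  generalize sf f δ (δ + a) n = x11 at *
  generalize sf f δ (δ + a - b) n = x12 at *
  generalize sf f δ (δ + a - c) n = x13 at *
  generalize sf f δ (δ + a - d) n = x14 at *
  generalize sf f δ (δ + a - b - c) n = x15 at *
  generalize sf f δ (δ + a - b - d) n = x16 at *
  generalize sf f δ (δ + a - c - d) n = x17 at *
  generalize sf f δ (δ + a - b - c - d) n = x18 at *
  generalize f (δ + a - b) = x19 at *
  generalize f (δ + a - c) = x20 at *
  generalize f (δ + a - d) = x21 at *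
  generalize f (a - b - c - d) = x22 at *
  generalize f (δ + a) = x23 at *
  generalize f (2 * δ + a) = x24 at *
  field_simp
  linear_combination -(x11 * x15 * x16 * x17) * R

/-- **Frenkel–Turaev summation** of the balanced terminating `₈E₇`. -/
theorem frenkel_turaev (hodd : ∀ t : ℂ, f (-t) = -f t)
    (hRiem : ∀ x y u v : ℂ,
      f (x + y) * f (x - y) * f (u + v) * f (u - v) =
        f (x + u) * f (x - u) * f (y + v) * f (y - v)
          - f (x + v) * f (x - v) * f (y + u) * f (y - u))
    (hδ : ∀ k : ℤ, k ≠ 0 → f ((k : ℂ) * δ) ≠ 0) (n : ℕ) :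
    ∀ {a b c d e : ℂ}, b + c + d + e = ((n : ℂ) + 1) * δ + 2 * a →
      NZ f δ a → NZ f δ (a - b) → NZ f δ (a - c) → NZ f δ (a - d) → NZ f δ (a - e) →
      ∑ k ∈ Finset.range (n + 1), ftTerm f δ a b c d e n k = ftValue f δ a b c d n := by
  induction n with
  | zero =>
    intro a b c d e _ ha _ _ _ _
    simp [ftTerm, ftValue, wp_zero, vwp_zero ha, sf_zero]
  | succ n ih =>
    intro a b c d e hbal ha hb hc hd he
    rw [ftValue_succ hodd hRiem n hbal ha hb hc hd he,
      ← ih (a := a) (e := e - δ) (by push_cast at hbal; linear_combination hbal) ha hb hc hd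
        (he.shift 1 (by push_cast; ring)),
      ← ih (a := a + 2 * δ) (b := b + δ) (c := c + δ) (d := d + δ) (e := e)
        (by push_cast at hbal; linear_combination hbal)
        (ha.shift 2 (by push_cast; ring)) (hb.shift 1 (by push_cast; ring))
        (hc.shift 1 (by push_cast; ring)) (hd.shift 1 (by push_cast; ring))
        (he.shift 2 (by push_cast; ring)),
      Finset.sum_range_succ', Finset.sum_congr rfl fun k _ =>
        ftTerm_succ hodd hRiem hδ n k ha he, Finset.sum_add_distrib, Finset.mul_sum]
    have h0 : ftTerm f δ a b c d e (n + 1) 0 = ftTerm f δ a b c d (e - δ) n 0 := by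
      simp [ftTerm, wp_zero]
    -- the term of index `n + 1` of the shorter series vanishes
    have hlast : ftTerm f δ a b c d (e - δ) n (n + 1) = 0 := by
      simp only [ftTerm, wp]
      rw [sf_neg_eq_zero hodd (Nat.lt_succ_self n)]
      simp
    have hsum : ∑ k ∈ Finset.range (n + 1), ftTerm f δ a b c d (e - δ) n (k + 1)
        + ftTerm f δ a b c d (e - δ) n 0
        = ∑ k ∈ Finset.range (n + 1), ftTerm f δ a b c d (e - δ) n k := by
      rw [← Finset.sum_range_succ', Finset.sum_range_succ, hlast, add_zero]
    rw [h0, ← hsum]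
    ring

/-! ### The elementary Bailey transformation -/

/-- The `k`-th term of the terminating series `₁₀E₉(a; b, c, d, e, g, h, -nδ)`. -/
noncomputable def tenTerm (f : ℂ → ℂ) (δ a b c d e g h : ℂ) (n k : ℕ) : ℂ :=
  vwp f δ a k * (wp f δ a b k * wp f δ a c k * wp f δ a d k)
    * (wp f δ a e k * wp f δ a g k * wp f δ a h k) * wp f δ a (-(n : ℂ) * δ) k

/-- The terminating series `₁₀E₉(a; b, c, d, e, g, h, -nδ)`. -/
noncomputable def tenSum (f : ℂ → ℂ) (δ a b c d e g h : ℂ) (n : ℕ) : ℂ :=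
  ∑ k ∈ Finset.range (n + 1), tenTerm f δ a b c d e g h n k

/-- The prefactor relating the series based at `a` and at `l`. -/
noncomputable def tenFactor (f : ℂ → ℂ) (δ a l e g : ℂ) (n : ℕ) : ℂ :=
  sf f δ (δ + a) n * sf f δ (δ + a - e - g) n * sf f δ (δ + l - e) n * sf f δ (δ + l - g) n
    / (sf f δ (δ + a - e) n * sf f δ (δ + a - g) n * sf f δ (δ + l - e - g) n
      * sf f δ (δ + l) n)

lemma wp_add {a a' u u' : ℂ} (j m : ℕ) (ha : a' = a + 2 * (j : ℂ) * δ)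
    (hu : u' = u + (j : ℂ) * δ) :
    wp f δ a u (j + m) = wp f δ a u j * wp f δ a' u' m := by
  subst ha hu
  unfold wp
  rw [sf_add, sf_add, show δ + a - u + j * δ = δ + (a + 2 * (j : ℂ) * δ) - (u + j * δ) by ring,
    mul_div_mul_comm]

/-- The Frenkel–Turaev summation, read as an expansion of the `b, c, d` part of the `₁₀E₉`
term. -/
lemma wp_triple_expand (hodd : ∀ t : ℂ, f (-t) = -f t)
    (hRiem : ∀ x y u v : ℂ,
      f (x + y) * f (x - y) * f (u + v) * f (u - v) =
        f (x + u) * f (x - u) * f (y + v) * f (y - v)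
          - f (x + v) * f (x - v) * f (y + u) * f (y - u))
    (hδ : ∀ k : ℤ, k ≠ 0 → f ((k : ℂ) * δ) ≠ 0) {a b c d l : ℂ} (k : ℕ)
    (hl : l = δ + 2 * a - b - c - d) (nl : NZ f δ l)
    (nb : NZ f δ (a - b)) (nc : NZ f δ (a - c)) (nd : NZ f δ (a - d)) (nal : NZ f δ (a - l)) :
    wp f δ a b k * wp f δ a c k * wp f δ a d k =
      sf f δ (a - l) k / sf f δ (δ + l) k *
        ∑ j ∈ Finset.range (k + 1),
          ftTerm f δ l (l + b - a) (l + c - a) (l + d - a) (a + (k : ℂ) * δ) k j := by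
  rw [frenkel_turaev hodd hRiem hδ k (by rw [hl]; ring) nl
    (nb.shift 0 (by push_cast; ring)) (nc.shift 0 (by push_cast; ring))
    (nd.shift 0 (by push_cast; ring)) ((nal.neg hodd).shift (-k) (by push_cast; ring))]
  unfold ftValue wp
  rw [show δ + l - (l + b - a) - (l + c - a) - (l + d - a) = a - l by rw [hl]; ring,
    show δ + l - (l + b - a) - (l + c - a) = d by rw [hl]; ring,
    show δ + l - (l + b - a) - (l + d - a) = c by rw [hl]; ring,
    show δ + l - (l + c - a) - (l + d - a) = b by rw [hl]; ring,
    show δ + l - (l + b - a) = δ + a - b by ring,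
    show δ + l - (l + c - a) = δ + a - c by ring,
    show δ + l - (l + d - a) = δ + a - d by ring]
  have h1 := nal.sf 0 (y := a - l) (by push_cast; ring) k
  have h2 := nl.sf 1 (y := δ + l) (by push_cast; ring) k
  have h3 := nb.sf 1 (y := δ + a - b) (by push_cast; ring) k
  have h4 := nc.sf 1 (y := δ + a - c) (by push_cast; ring) k
  have h5 := nd.sf 1 (y := δ + a - d) (by push_cast; ring) k
  generalize sf f δ (a - l) k = x0 at *
  generalize sf f δ (δ + l) k = x1 at *
  generalize sf f δ (δ + a - b) k = x2 at *
  generalize sf f δ (δ + a - c) k = x3 at *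
  generalize sf f δ (δ + a - d) k = x4 at *
  field_simp

/-- The coefficient of the inner `₈E₇` after interchanging the two summations. -/
noncomputable def innerCoeff (f : ℂ → ℂ) (δ a l b c d e g h : ℂ) (n j : ℕ) : ℂ :=
  vwp f δ l j * (wp f δ l b j * wp f δ l c j * wp f δ l d j)
    * (f (a + 2 * (j : ℂ) * δ) / f a * (sf f δ a (j + j) / sf f δ (δ + l) (j + j)))
    * (wp f δ a e j * wp f δ a g j * wp f δ a h j) * wp f δ a (-(n : ℂ) * δ) j

/-- With `k = j + m` and `n = j + M`, the summand of the double sum is a term of an inner `₈E₇`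
in `m`, based at `a + 2jδ`. -/
lemma double_term (hodd : ∀ t : ℂ, f (-t) = -f t)
    (hδ : ∀ k : ℤ, k ≠ 0 → f ((k : ℂ) * δ) ≠ 0) {a b c d e g h l : ℂ} (j m M : ℕ)
    (na : NZ f δ a) (nl : NZ f δ l) (nal : NZ f δ (a - l)) :
    vwp f δ a (j + m) * (sf f δ (a - l) (j + m) / sf f δ (δ + l) (j + m))
        * (wp f δ a e (j + m) * wp f δ a g (j + m) * wp f δ a h (j + m))
        * wp f δ a (-((j + M : ℕ) : ℂ) * δ) (j + m)
        * ftTerm f δ l b c d (a + ((j + m : ℕ) : ℂ) * δ) (j + m) j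
      = innerCoeff f δ a l b c d e g h (j + M) j
        * ftTerm f δ (a + 2 * (j : ℂ) * δ) (e + j * δ) (g + j * δ) (a - l) (h + j * δ) M m := by
  unfold innerCoeff ftTerm
  rw [wp_add (u := e) j m rfl rfl, wp_add (u := g) j m rfl rfl, wp_add (u := h) j m rfl rfl,
    wp_add (u := -((j + M : ℕ) : ℂ) * δ) (u' := -(M : ℂ) * δ) j m rfl (by push_cast; ring)]
  have key : vwp f δ a (j + m) * (sf f δ (a - l) (j + m) / sf f δ (δ + l) (j + m))
      * wp f δ l (a + ((j + m : ℕ) : ℂ) * δ) j * wp f δ l (-((j + m : ℕ) : ℂ) * δ) j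
      = f (a + 2 * (j : ℂ) * δ) / f a * (sf f δ a (j + j) / sf f δ (δ + l) (j + j))
        * vwp f δ (a + 2 * (j : ℂ) * δ) m * wp f δ (a + 2 * (j : ℂ) * δ) (a - l) m := by
    unfold vwp wp
    rw [show δ + l - -((j + m : ℕ) : ℂ) * δ = δ + l + ((j + m : ℕ) : ℂ) * δ by ring,
      show δ + (a + 2 * (j : ℂ) * δ) - (a - l) = δ + l + 2 * (j : ℂ) * δ by ring,
      show a + 2 * (j : ℂ) * δ + 2 * (m : ℂ) * δ = a + 2 * ((j + m : ℕ) : ℂ) * δ by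
        push_cast; ring,
      sf_reflect hodd (-((j + m : ℕ) : ℂ) * δ) (δ + (m : ℂ) * δ) j (by push_cast; ring),
      sf_reflect hodd (δ + l - (a + ((j + m : ℕ) : ℂ) * δ)) (a - l + (m : ℂ) * δ) j
        (by push_cast; ring)]
    -- regrouping of `[x]_{2j + m}`
    have regroup : ∀ x : ℂ, sf f δ x (j + m) * sf f δ (x + ((j + m : ℕ) : ℂ) * δ) j
        = sf f δ x (j + j) * sf f δ (x + 2 * (j : ℂ) * δ) m := by
      intro x
      rw [← sf_add, show x + 2 * (j : ℂ) * δ = x + ((j + j : ℕ) : ℂ) * δ by push_cast; ring,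
        ← sf_add]
      congr 1; ring
    have r1 := regroup a
    have r2 := regroup (δ + l)
    have r3 := sf_add (f := f) (δ := δ) (a - l) m j
    have r4 := sf_add (f := f) (δ := δ) δ m j
    rw [add_comm m j] at r3 r4
    rw [r3, r4]
    have n1 : f a ≠ 0 := na.at 0 (by push_cast; ring)
    have n2 : f (a + 2 * (j : ℂ) * δ) ≠ 0 := na.at (2 * j) (by push_cast; ring)
    have n3 := nl.sf 1 (y := δ + l) (by push_cast; ring) (j + m)
    have n4 := nl.sf 1 (y := δ + l) (by push_cast; ring) (j + j)
    have n5 := nl.sf (1 + j + m) (y := δ + l + ((j + m : ℕ) : ℂ) * δ) (by push_cast; ring) j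
    have n6 := nl.sf (1 + 2 * j) (y := δ + l + 2 * (j : ℂ) * δ) (by push_cast; ring) m
    have n7 := nal.sf m (y := a - l + (m : ℂ) * δ) (by push_cast; ring) j
    have n8 := sf_delta_ne_zero hδ m
    have n9 : sf f δ (δ + (m : ℂ) * δ) j ≠ 0 := by
      have := sf_delta_ne_zero hδ (m + j)
      rw [sf_add] at this
      exact right_ne_zero_of_mul this
    have n10 : ((-1 : ℂ)) ^ j ≠ 0 := pow_ne_zero _ (by norm_num)
    clear regroup r3 r4 hodd hδ na nl nal
    generalize (-1 : ℂ) ^ j = ε at *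
    generalize f (a + 2 * ((j + m : ℕ) : ℂ) * δ) = x0 at *
    generalize f (a + 2 * (j : ℂ) * δ) = x1 at *
    generalize sf f δ (δ + l + ((j + m : ℕ) : ℂ) * δ) j = x2 at *
    generalize sf f δ (δ + l + 2 * (j : ℂ) * δ) m = x3 at *
    generalize sf f δ (a - l + (m : ℂ) * δ) j = x4 at *
    generalize sf f δ (δ + (m : ℂ) * δ) j = x5 at *
    generalize sf f δ (a + ((j + m : ℕ) : ℂ) * δ) j = x6 at *
    generalize sf f δ (a + 2 * (j : ℂ) * δ) m = x7 at *
    generalize sf f δ (δ + l) (j + m) = x8 at *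
    generalize sf f δ (δ + l) (j + j) = x9 at *
    generalize sf f δ (a - l) m = x10 at *
    generalize sf f δ a (j + m) = x11 at *
    generalize sf f δ a (j + j) = x12 at *
    generalize sf f δ δ m = x13 at *
    generalize f a = x14 at *
    have e1 : x0 / x14 * (x11 / (x13 * x5)) * (x10 * x4 / x8) * (x6 / (ε * x4)) * (ε * x5 / x2)
        = x0 * x10 / (x14 * x13) * ((x11 * x6) / (x8 * x2)) := by field_simp
    have e2 : x1 / x14 * (x12 / x9) * (x0 / x1 * (x7 / x13)) * (x10 / x3)
        = x0 * x10 / (x14 * x13) * ((x12 * x7) / (x9 * x3)) := by field_simp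
    rw [e1, e2, r1, r2]
  linear_combination (vwp f δ l j * wp f δ l b j * wp f δ l c j * wp f δ l d j
    * wp f δ a e j * wp f δ a g j * wp f δ a h j * wp f δ a (-((j + M : ℕ) : ℂ) * δ) j
    * wp f δ (a + 2 * (j : ℂ) * δ) (e + j * δ) m * wp f δ (a + 2 * (j : ℂ) * δ) (g + j * δ) m
    * wp f δ (a + 2 * (j : ℂ) * δ) (h + j * δ) m
    * wp f δ (a + 2 * (j : ℂ) * δ) (-(M : ℂ) * δ) m) * key

set_option maxHeartbeats 1000000 in
/-- Evaluation of the inner sum turns the coefficient into a `₁₀E₉` term based at `l`. -/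
lemma innerCoeff_mul_ftValue (hodd : ∀ t : ℂ, f (-t) = -f t)
    {a b c d e g h l : ℂ} (j M : ℕ)
    (hbal : e + g + h = ((j + M : ℕ) + 1 : ℂ) * δ + a + l)
    (na : NZ f δ a) (nl : NZ f δ l) (ne : NZ f δ (a - e)) (ng : NZ f δ (a - g))
    (nh : NZ f δ (a - h)) (nle : NZ f δ (l - e)) (nlg : NZ f δ (l - g)) (nlh : NZ f δ (l - h)) :
    innerCoeff f δ a l b c d e g h (j + M) j
        * ftValue f δ (a + 2 * (j : ℂ) * δ) (e + j * δ) (g + j * δ) (a - l) M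
      = tenFactor f δ a l e g (j + M) * tenTerm f δ l b c d e g h (j + M) j := by
  have hbal' : e + g + h = ((j : ℂ) + M + 1) * δ + a + l := by rw [hbal]; push_cast; ring
  unfold innerCoeff tenFactor tenTerm
  generalize hV : vwp f δ l j * (wp f δ l b j * wp f δ l c j * wp f δ l d j) = V
  clear hV
  unfold ftValue wp
  rw [show δ + a - -((j + M : ℕ) : ℂ) * δ = δ + a + ((j + M : ℕ) : ℂ) * δ by ring,
    show δ + l - -((j + M : ℕ) : ℂ) * δ = δ + l + ((j + M : ℕ) : ℂ) * δ by ring,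
    show δ + (a + 2 * (j : ℂ) * δ) - (e + j * δ) - (g + j * δ) - (a - l) = δ + l - e - g by ring,
    show δ + (a + 2 * (j : ℂ) * δ) - (e + j * δ) - (g + j * δ) = δ + a - e - g by ring,
    show δ + (a + 2 * (j : ℂ) * δ) - (e + j * δ) - (a - l) = δ + l - e + j * δ by ring,
    show δ + (a + 2 * (j : ℂ) * δ) - (g + j * δ) - (a - l) = δ + l - g + j * δ by ring,
    show δ + (a + 2 * (j : ℂ) * δ) - (e + j * δ) = δ + a - e + j * δ by ring,
    show δ + (a + 2 * (j : ℂ) * δ) - (g + j * δ) = δ + a - g + j * δ by ring,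
    show δ + (a + 2 * (j : ℂ) * δ) - (a - l) = δ + l + 2 * (j : ℂ) * δ by ring,
    show δ + (a + 2 * (j : ℂ) * δ) = δ + a + 2 * (j : ℂ) * δ by ring]
  have regroup : ∀ x : ℂ, sf f δ x (j + M) * sf f δ (x + ((j + M : ℕ) : ℂ) * δ) j
      = sf f δ x (j + j) * sf f δ (x + 2 * (j : ℂ) * δ) M := by
    intro x
    rw [← sf_add, show x + 2 * (j : ℂ) * δ = x + ((j + j : ℕ) : ℂ) * δ by push_cast; ring,
      ← sf_add]
    congr 1; ring
  have r1 := regroup (δ + a)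
  have r2 := regroup (δ + l)
  have r3 := sf_succ' (f := f) (δ := δ) a (j + j)
  rw [sf_succ, show a + ((j + j : ℕ) : ℂ) * δ = a + 2 * (j : ℂ) * δ by push_cast; ring,
    show a + δ = δ + a by ring] at r3
  have r4 : sf f δ (δ + a - e - g) (j + M)
      = sf f δ (δ + a - e - g) M * ((-1) ^ j * sf f δ (δ + l - h) j) := by
    rw [add_comm j M, sf_add, sf_reflect hodd _ (δ + l - h) j (by linear_combination -hbal')]
  have r5 : sf f δ (δ + l - e - g) (j + M)
      = sf f δ (δ + l - e - g) M * ((-1) ^ j * sf f δ (δ + a - h) j) := by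
    rw [add_comm j M, sf_add, sf_reflect hodd _ (δ + a - h) j (by linear_combination -hbal')]
  rw [r4, r5, sf_add (δ + a - e), sf_add (δ + a - g), sf_add (δ + l - e), sf_add (δ + l - g)]
  have n0 : f a ≠ 0 := na.at 0 (by push_cast; ring)
  have n1 := ne.sf 1 (y := δ + a - e) (by push_cast; ring) j
  have n2 := ng.sf 1 (y := δ + a - g) (by push_cast; ring) j
  have n3 := nh.sf 1 (y := δ + a - h) (by push_cast; ring) j
  have n4 := nle.sf 1 (y := δ + l - e) (by push_cast; ring) j
  have n5 := nlg.sf 1 (y := δ + l - g) (by push_cast; ring) j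
  have n6 := nlh.sf 1 (y := δ + l - h) (by push_cast; ring) j
  have n7 := ne.sf (1 + j) (y := δ + a - e + j * δ) (by push_cast; ring) M
  have n8 := ng.sf (1 + j) (y := δ + a - g + j * δ) (by push_cast; ring) M
  have n9 := (nh.neg hodd).sf (-j - M) (y := δ + l - e - g)
    (by push_cast; linear_combination -hbal') M
  have n10 := na.sf (1 + j + M) (y := δ + a + ((j + M : ℕ) : ℂ) * δ) (by push_cast; ring) j
  have n11 := nl.sf (1 + j + M) (y := δ + l + ((j + M : ℕ) : ℂ) * δ) (by push_cast; ring) j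
  have n12 := nl.sf 1 (y := δ + l) (by push_cast; ring) (j + j)
  have n13 := nl.sf 1 (y := δ + l) (by push_cast; ring) (j + M)
  have n14 := nl.sf (1 + 2 * j) (y := δ + l + 2 * (j : ℂ) * δ) (by push_cast; ring) M
  have n15 : ((-1 : ℂ)) ^ j ≠ 0 := pow_ne_zero _ (by norm_num)
  clear regroup r4 r5 hodd na nl ne ng nh nle nlg nlh hbal hbal'
  generalize (-1 : ℂ) ^ j = ε at *
  generalize sf f δ (-((j + M : ℕ) : ℂ) * δ) j = y0 at *
  generalize sf f δ (δ + a + ((j + M : ℕ) : ℂ) * δ) j = y1 at *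
  generalize sf f δ (δ + l + ((j + M : ℕ) : ℂ) * δ) j = y2 at *
  generalize sf f δ (δ + a + 2 * (j : ℂ) * δ) M = y3 at *
  generalize sf f δ (δ + l + 2 * (j : ℂ) * δ) M = y4 at *
  generalize sf f δ (δ + l - e + j * δ) M = y5 at *
  generalize sf f δ (δ + l - g + j * δ) M = y6 at *
  generalize sf f δ (δ + a - e + j * δ) M = y7 at *
  generalize sf f δ (δ + a - g + j * δ) M = y8 at *
  generalize sf f δ (δ + a - e - g) M = y9 at *
  generalize sf f δ (δ + l - e - g) M = y10 at *
  generalize sf f δ (δ + a - e) j = y11 at *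
  generalize sf f δ (δ + a - g) j = y12 at *
  generalize sf f δ (δ + a - h) j = y13 at *
  generalize sf f δ (δ + l - e) j = y14 at *
  generalize sf f δ (δ + l - g) j = y15 at *
  generalize sf f δ (δ + l - h) j = y16 at *
  generalize sf f δ (δ + a) (j + j) = y17 at *
  generalize sf f δ (δ + a) (j + M) = y18 at *
  generalize sf f δ (δ + l) (j + j) = y19 at *
  generalize sf f δ (δ + l) (j + M) = y20 at *
  generalize sf f δ a (j + j) = y21 at *
  generalize f (a + 2 * (j : ℂ) * δ) = y22 at *
  generalize f a = y23 at *
  generalize sf f δ e j = y24 at *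
  generalize sf f δ g j = y25 at *
  generalize sf f δ h j = y26 at *
  have q1 : y22 / y23 * (y21 / y19) * (y3 / (y1 * y4)) = y18 / (y20 * y2) := by
    rw [r2]
    field_simp
    linear_combination y3 * r3 - y23 * r1
  have e1 : V * (y22 / y23 * (y21 / y19)) * (y24 / y11 * (y25 / y12) * (y26 / y13)) * (y0 / y1)
      * (y3 * y9 * y5 * y6 / (y7 * y8 * y4 * y10))
      = (V * y24 * y25 * y26 * y0 * y9 * y5 * y6 / (y11 * y12 * y13 * y7 * y8 * y10))
        * (y22 / y23 * (y21 / y19) * (y3 / (y1 * y4))) := by ring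
  rw [e1, q1]
  field_simp

/-- Genericity of the parameters in the elementary Bailey transformation from base `a` to
base `l`: every bracket met in a denominator of the double sum is nonzero. -/
def BaileyGeneric (f : ℂ → ℂ) (δ a l b c d e g h : ℂ) : Prop :=
  NZ f δ a ∧ NZ f δ l ∧ NZ f δ (a - b) ∧ NZ f δ (a - c) ∧ NZ f δ (a - d) ∧ NZ f δ (a - e)
    ∧ NZ f δ (a - g) ∧ NZ f δ (a - h) ∧ NZ f δ (l - e) ∧ NZ f δ (l - g) ∧ NZ f δ (l - h)
    ∧ NZ f δ (a - l)

/-- **Elementary Bailey transformation**: `b, c, d` are shifted by `l - a` and `e, g, h` are kept,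
where `l = δ + 2a - b - c - d`. -/
theorem bailey_elementary (hodd : ∀ t : ℂ, f (-t) = -f t)
    (hRiem : ∀ x y u v : ℂ,
      f (x + y) * f (x - y) * f (u + v) * f (u - v) =
        f (x + u) * f (x - u) * f (y + v) * f (y - v)
          - f (x + v) * f (x - v) * f (y + u) * f (y - u))
    (hδ : ∀ k : ℤ, k ≠ 0 → f ((k : ℂ) * δ) ≠ 0) {a b c d e g h l : ℂ} (n : ℕ)
    (hl : l = δ + 2 * a - b - c - d)
    (hbal : b + c + d + e + g + h = ((n : ℂ) + 2) * δ + 3 * a)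
    (hgen : BaileyGeneric f δ a l b c d e g h) :
    tenSum f δ a b c d e g h n = tenFactor f δ a l e g n
      * tenSum f δ l (l + b - a) (l + c - a) (l + d - a) e g h n := by
  obtain ⟨na, nl, nb, nc, nd, ne, ng, nh, nle, nlg, nlh, nal⟩ := hgen
  -- `G j m` is the summand of the double sum with `k = j + m`
  let G : ℕ → ℕ → ℂ := fun j m =>
    vwp f δ a (j + m) * (sf f δ (a - l) (j + m) / sf f δ (δ + l) (j + m))
        * (wp f δ a e (j + m) * wp f δ a g (j + m) * wp f δ a h (j + m))
        * wp f δ a (-(n : ℂ) * δ) (j + m)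
        * ftTerm f δ l (l + b - a) (l + c - a) (l + d - a) (a + ((j + m : ℕ) : ℂ) * δ) (j + m) j
  have h1 : tenSum f δ a b c d e g h n
      = ∑ k ∈ Finset.range (n + 1), ∑ j ∈ Finset.range (k + 1), G j (k - j) := by
    refine Finset.sum_congr rfl fun k _ => ?_
    unfold tenTerm
    rw [wp_triple_expand hodd hRiem hδ k hl nl nb nc nd nal, Finset.mul_sum, Finset.mul_sum,
      Finset.sum_mul, Finset.sum_mul]
    refine Finset.sum_congr rfl fun j hj => ?_
    have hj' : j + (k - j) = k := by have := Finset.mem_range.1 hj; omega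
    simp only [G, hj']
    ring
  rw [h1, Finset.sum_range_diag_flip]
  unfold tenSum
  rw [Finset.mul_sum]
  refine Finset.sum_congr rfl fun j hj => ?_
  obtain ⟨M, rfl⟩ : ∃ M, n = j + M := ⟨n - j, by have := Finset.mem_range.1 hj; omega⟩
  have hr : j + M + 1 - j = M + 1 := by omega
  rw [hr]
  have hbal' : e + g + h = ((j : ℂ) + M + 1) * δ + a + l := by
    rw [hl]; push_cast at hbal; linear_combination hbal
  rw [← innerCoeff_mul_ftValue hodd j M (by push_cast; exact hbal') na nl ne ng nh nle nlg nlh,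
    ← frenkel_turaev hodd hRiem hδ M (a := a + 2 * (j : ℂ) * δ) (b := e + j * δ)
      (c := g + j * δ) (d := a - l) (e := h + j * δ) (by linear_combination hbal')
      (na.shift (2 * j) (by push_cast; ring)) (ne.shift j (by push_cast; ring))
      (ng.shift j (by push_cast; ring)) (nl.shift (2 * j) (by push_cast; ring))
      (nh.shift j (by push_cast; ring)), Finset.mul_sum]
  exact Finset.sum_congr rfl fun m _ => double_term hodd hδ j m M na nl nal

/-! ### The composed transformation for generic parameters -/

/-- The prefactor of the Bailey transformation with `d₂ = -nδ`. -/
noncomputable def baileyFactor (f : ℂ → ℂ) (δ s c0 c1 c2 c3 d0 d1 : ℂ) (n : ℕ) : ℂ :=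
  (sf f δ d0 n * sf f δ (δ + s) n / (sf f δ (d0 - d1) n * sf f δ (δ + s - d1) n))
    * (sf f δ (δ + s - c0 - d1) n / sf f δ (δ + s - c0) n)
    * (sf f δ (δ + s - c1 - d1) n / sf f δ (δ + s - c1) n)
    * (sf f δ (δ + s - c2 - d1) n / sf f δ (δ + s - c2) n)
    * (sf f δ (δ + s - c3 - d1) n / sf f δ (δ + s - c3) n)

/-- The Bailey prefactor is the quotient of the prefactors of the two elementary transformations
to the base `l`. -/
lemma tenFactor_eq (hodd : ∀ t : ℂ, f (-t) = -f t) {s c0 c1 c2 c3 d0 d1 l st ct0 ct1 ct2 ct3 dt0 : ℂ}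
    (n : ℕ) (hbal : c0 + c1 + c2 + c3 + d0 + d1 = ((n : ℂ) + 2) * δ + 3 * s)
    (hl : l = δ + 2 * s - c0 - c1 - d0) (hst : st = d1 - (n : ℂ) * δ - d0)
    (hct0 : ct0 = δ + s - d0 - c0) (hct1 : ct1 = δ + s - d0 - c1)
    (h1 : BaileyGeneric f δ s l c0 c1 d0 c2 c3 d1)
    (h2 : BaileyGeneric f δ st l ct2 ct3 dt0 ct0 ct1 d1) :
    tenFactor f δ s l c2 c3 n
      = baileyFactor f δ s c0 c1 c2 c3 d0 d1 n * tenFactor f δ st l ct0 ct1 n := by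
  obtain ⟨-, nl, nc0, nc1, -, nc2, nc3, nd1, -⟩ := h1
  obtain ⟨nst, -, -, -, -, nt0, nt1, ntd, -⟩ := h2
  unfold tenFactor baileyFactor
  rw [sf_reflect hodd (δ + l - c2) (δ + s - c3 - d1) n (by rw [hl]; linear_combination -hbal),
    sf_reflect hodd (δ + l - c3) (δ + s - c2 - d1) n (by rw [hl]; linear_combination -hbal),
    sf_reflect hodd (δ + l - c2 - c3) (δ + s - d1) n (by rw [hl]; linear_combination -hbal),
    sf_reflect hodd (δ + st) (d0 - d1) n (by rw [hst]; ring),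
    sf_reflect hodd (δ + st - ct0) (δ + s - c0 - d1) n (by rw [hst, hct0]; ring),
    sf_reflect hodd (δ + st - ct1) (δ + s - c1 - d1) n (by rw [hst, hct1]; ring),
    show δ + st - ct0 - ct1 = δ + s - c2 - c3 by
      rw [hst, hct0, hct1]; linear_combination hbal,
    show δ + l - ct0 - ct1 = d0 by rw [hl, hct0, hct1]; ring,
    show δ + l - ct0 = δ + s - c1 by rw [hl, hct0]; ring,
    show δ + l - ct1 = δ + s - c0 by rw [hl, hct1]; ring]
  have m1 := nl.sf 1 (y := δ + l) (by push_cast; ring) n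
  have m2 := nc0.sf 1 (y := δ + s - c0) (by push_cast; ring) n
  have m3 := nc1.sf 1 (y := δ + s - c1) (by push_cast; ring) n
  have m4 := nc2.sf 1 (y := δ + s - c2) (by push_cast; ring) n
  have m5 := nc3.sf 1 (y := δ + s - c3) (by push_cast; ring) n
  have m6 := nd1.sf 1 (y := δ + s - d1) (by push_cast; ring) n
  have m7 := (nst.neg hodd).sf (-n) (y := d0 - d1) (by rw [hst]; push_cast; ring) n
  have m8 := (nt0.neg hodd).sf (-n) (y := δ + s - c0 - d1)
    (by rw [hst, hct0]; push_cast; ring) n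
  have m9 := (nt1.neg hodd).sf (-n) (y := δ + s - c1 - d1)
    (by rw [hst, hct1]; push_cast; ring) n
  have m10 := (ntd.neg hodd).sf (-n) (y := d0) (by rw [hst]; push_cast; ring) n
  have m11 : ((-1 : ℂ)) ^ n ≠ 0 := pow_ne_zero _ (by norm_num)
  have m12 : (-1 : ℂ) ^ n * (-1) ^ n = 1 := by rw [← mul_pow]; norm_num
  clear hodd hbal hl hst hct0 hct1 nl nc0 nc1 nc2 nc3 nd1 nst nt0 nt1 ntd
  generalize (-1 : ℂ) ^ n = ε at *
  generalize sf f δ (δ + l) n = x0 at *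
  generalize sf f δ (δ + s - c0 - d1) n = y0 at *
  generalize sf f δ (δ + s - c1 - d1) n = y1 at *
  generalize sf f δ (δ + s - c2 - d1) n = y2 at *
  generalize sf f δ (δ + s - c3 - d1) n = y3 at *
  generalize sf f δ (δ + s - c2 - c3) n = y4 at *
  generalize sf f δ (δ + s - c0) n = x1 at *
  generalize sf f δ (δ + s - c1) n = x2 at *
  generalize sf f δ (δ + s - c2) n = x3 at *
  generalize sf f δ (δ + s - c3) n = x4 at *
  generalize sf f δ (δ + s - d1) n = x5 at *
  generalize sf f δ (d0 - d1) n = x6 at *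
  generalize sf f δ d0 n = x7 at *
  generalize sf f δ (δ + s) n = x8 at *
  field_simp
  linear_combination (x8 * y4 * y3 * y2) * m12

/-- The Bailey transformation for generic parameters: both sides are carried to the same series
based at `l` by an elementary transformation. -/
theorem bailey_generic (hodd : ∀ t : ℂ, f (-t) = -f t)
    (hRiem : ∀ x y u v : ℂ,
      f (x + y) * f (x - y) * f (u + v) * f (u - v) =
        f (x + u) * f (x - u) * f (y + v) * f (y - v)
          - f (x + v) * f (x - v) * f (y + u) * f (y - u))
    (hδ : ∀ k : ℤ, k ≠ 0 → f ((k : ℂ) * δ) ≠ 0)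
    {s c0 c1 c2 c3 d0 d1 l st ct0 ct1 ct2 ct3 dt0 : ℂ}
    (n : ℕ) (hbal : c0 + c1 + c2 + c3 + d0 + d1 = ((n : ℂ) + 2) * δ + 3 * s)
    (hl : l = δ + 2 * s - c0 - c1 - d0) (hst : st = d1 - (n : ℂ) * δ - d0)
    (hdt0 : dt0 = d1 - (n : ℂ) * δ - s)
    (hct0 : ct0 = δ + s - d0 - c0) (hct1 : ct1 = δ + s - d0 - c1)
    (hct2 : ct2 = δ + s - d0 - c2) (hct3 : ct3 = δ + s - d0 - c3)
    (h1 : BaileyGeneric f δ s l c0 c1 d0 c2 c3 d1)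
    (h2 : BaileyGeneric f δ st l ct2 ct3 dt0 ct0 ct1 d1) :
    tenSum f δ s c0 c1 d0 c2 c3 d1 n
      = baileyFactor f δ s c0 c1 c2 c3 d0 d1 n
        * tenSum f δ st ct2 ct3 dt0 ct0 ct1 d1 n := by
  have e1 := bailey_elementary hodd hRiem hδ n hl (by linear_combination hbal) h1
  have e2 := bailey_elementary hodd hRiem hδ n (l := l)
    (by rw [hl, hst, hct2, hct3, hdt0]; linear_combination -hbal)
    (by rw [hst, hct0, hct1, hct2, hct3, hdt0]; linear_combination -hbal) h2
  rw [e1, e2, tenFactor_eq hodd n hbal hl hst hct0 hct1 h1 h2, ← mul_assoc]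
  congr 1
  rw [show l + c0 - s = ct1 by rw [hl, hct1]; ring, show l + c1 - s = ct0 by rw [hl, hct0]; ring,
    show l + ct2 - st = c3 by rw [hl, hst, hct2]; linear_combination -hbal,
    show l + ct3 - st = c2 by rw [hl, hst, hct3]; linear_combination -hbal,
    show l + dt0 - st = l + d0 - s by rw [hst, hdt0]; ring]
  refine Finset.sum_congr rfl fun k _ => ?_
  unfold tenTerm
  ring

/-! ### Removal of the genericity assumption -/

/-- Along a nonconstant affine path the condition `NZ` holds off countably many closed nowhere dense
sets, by the identity theorem. -/
lemma nz_residual (hf : f ≠ 0) (hdiff : Differentiable ℂ f) {g : ℂ → ℂ} (x r : ℂ) (hr : r ≠ 0)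
    (hg : ∀ t, g t = x + r * t) : ∀ᶠ t in residual ℂ, NZ f δ (g t) := by
  refine eventually_countable_forall.2 fun k => ?_
  have hd : Differentiable ℂ fun t => f (g t + (k : ℂ) * δ) := by
    simp only [hg]; fun_prop
  refine residual_of_dense_open (isOpen_ne_fun hd.continuous continuous_const) ?_
  by_contra hnd
  obtain ⟨w, hw⟩ := Function.ne_iff.1 hf
  have hne : (interior {t : ℂ | f (g t + (k : ℂ) * δ) ≠ 0}ᶜ).Nonempty := by
    rw [Set.nonempty_iff_ne_empty]
    intro he
    rw [interior_eq_empty_iff_dense_compl, compl_compl] at he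
    exact hnd he
  obtain ⟨z, hz⟩ := hne
  have hev : (fun t => f (g t + (k : ℂ) * δ)) =ᶠ[nhds z] fun _ => 0 := by
    filter_upwards [mem_interior_iff_mem_nhds.1 hz] with t ht
    simpa using ht
  have han : AnalyticOnNhd ℂ (fun t => f (g t + (k : ℂ) * δ)) Set.univ :=
    fun t _ => hd.analyticAt t
  have h0 := han.eq_of_eventuallyEq (fun t _ => analyticAt_const) hev
  apply hw
  have := congrFun h0 ((w - x - k * δ) / r)
  simp only [hg] at this
  rw [Pi.zero_apply, ← this]
  congr 1
  field_simp
  ring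

lemma baileyGeneric_residual (hf : f ≠ 0) (hdiff : Differentiable ℂ f)
    {a l b c d e g h ra rl rb rc rd re rg rh : ℂ}
    (hr : ra ≠ 0 ∧ rl ≠ 0 ∧ ra - rb ≠ 0 ∧ ra - rc ≠ 0 ∧ ra - rd ≠ 0 ∧ ra - re ≠ 0 ∧ ra - rg ≠ 0
      ∧ ra - rh ≠ 0 ∧ rl - re ≠ 0 ∧ rl - rg ≠ 0 ∧ rl - rh ≠ 0 ∧ ra - rl ≠ 0) :
    ∀ᶠ t in residual ℂ, BaileyGeneric f δ (a + ra * t) (l + rl * t) (b + rb * t) (c + rc * t)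
      (d + rd * t) (e + re * t) (g + rg * t) (h + rh * t) := by
  obtain ⟨r1, r2, r3, r4, r5, r6, r7, r8, r9, r10, r11, r12⟩ := hr
  have key : ∀ x y p q : ℂ, p - q ≠ 0 →
      ∀ᶠ t in residual ℂ, NZ f δ ((x + p * t) - (y + q * t)) := fun x y p q hpq =>
    nz_residual hf hdiff (x - y) (p - q) hpq fun t => by ring
  filter_upwards [nz_residual (δ := δ) hf hdiff a ra r1 fun _ => rfl,
    nz_residual (δ := δ) hf hdiff l rl r2 fun _ => rfl, key a b ra rb r3, key a c ra rc r4,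
    key a d ra rd r5, key a e ra re r6, key a g ra rg r7, key a h ra rh r8, key l e rl re r9,
    key l g rl rg r10, key l h rl rh r11, key a l ra rl r12]
    with t t1 t2 t3 t4 t5 t6 t7 t8 t9 t10 t11 t12
  exact ⟨t1, t2, t3, t4, t5, t6, t7, t8, t9, t10, t11, t12⟩

lemma continuous_sf (hc : Continuous f) {g : ℂ → ℂ} (hg : Continuous g) (k : ℕ) :
    Continuous fun t => sf f δ (g t) k := by
  unfold sf
  fun_prop

lemma continuousAt_wp (hc : Continuous f) {a u : ℂ → ℂ} (ha : Continuous a) (hu : Continuous u)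
    {n k : ℕ} (hk : k ≤ n) {t : ℂ}
    (h : ∀ l : ℕ, l < n → f (δ + a t - u t + (l : ℂ) * δ) ≠ 0) :
    ContinuousAt (fun t => wp f δ (a t) (u t) k) t :=
  (continuous_sf hc hu k).continuousAt.div
    (continuous_sf hc (by fun_prop) k).continuousAt (sf_ne_zero fun l hl => h l (by omega))

lemma continuousAt_tenSum (hδ : ∀ k : ℤ, k ≠ 0 → f ((k : ℂ) * δ) ≠ 0) (hc : Continuous f)
    {a u1 u2 u3 u4 u5 u6 : ℂ → ℂ} (ha : Continuous a)
    (h1 : Continuous u1) (h2 : Continuous u2) (h3 : Continuous u3) (h4 : Continuous u4)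
    (h5 : Continuous u5) (h6 : Continuous u6) {n : ℕ} {t : ℂ} (ha0 : f (a t) ≠ 0)
    (hn : ∀ l : ℕ, l < n →
      f (δ + a t - u1 t + (l : ℂ) * δ) ≠ 0 ∧ f (δ + a t - u2 t + (l : ℂ) * δ) ≠ 0
      ∧ f (δ + a t - u3 t + (l : ℂ) * δ) ≠ 0 ∧ f (δ + a t - u4 t + (l : ℂ) * δ) ≠ 0
      ∧ f (δ + a t - u5 t + (l : ℂ) * δ) ≠ 0 ∧ f (δ + a t - u6 t + (l : ℂ) * δ) ≠ 0
      ∧ f (δ + a t - -(n : ℂ) * δ + (l : ℂ) * δ) ≠ 0) :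
    ContinuousAt (fun t => tenSum f δ (a t) (u1 t) (u2 t) (u3 t) (u4 t) (u5 t) (u6 t) n) t := by
  unfold tenSum tenTerm
  refine tendsto_finsetSum _ fun k hk => ?_
  have hk' : k ≤ n := by have := Finset.mem_range.1 hk; omega
  have hv : ContinuousAt (fun t => vwp f δ (a t) k) t := by
    unfold vwp
    refine ContinuousAt.mul (ContinuousAt.div (by fun_prop) (by fun_prop) ha0)
      (ContinuousAt.div (continuous_sf hc ha k).continuousAt continuousAt_const
        (sf_delta_ne_zero hδ k))
  exact ((hv.mul (((continuousAt_wp hc ha h1 hk' fun l hl => (hn l hl).1).mul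
    (continuousAt_wp hc ha h2 hk' fun l hl => (hn l hl).2.1)).mul
    (continuousAt_wp hc ha h3 hk' fun l hl => (hn l hl).2.2.1))).mul
    (((continuousAt_wp hc ha h4 hk' fun l hl => (hn l hl).2.2.2.1).mul
    (continuousAt_wp hc ha h5 hk' fun l hl => (hn l hl).2.2.2.2.1)).mul
    (continuousAt_wp hc ha h6 hk' fun l hl => (hn l hl).2.2.2.2.2.1))).mul
    (continuousAt_wp hc ha continuous_const hk' fun l hl => (hn l hl).2.2.2.2.2.2)

/-- The series terminates because `[-nδ]_k = 0` for `k > n`. -/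
lemma E1_eq_tenSum (hodd : ∀ t : ℂ, f (-t) = -f t) (a u0 u1 u2 u3 u4 u5 : ℂ) (n : ℕ) :
    E1 f δ a ![u0, u1, u2, u3, u4, u5, -(n : ℂ) * δ] = tenSum f δ a u0 u1 u4 u2 u3 u5 n := by
  unfold E1 tenSum
  rw [tsum_eq_sum (s := Finset.range (n + 1))]
  · refine Finset.sum_congr rfl fun k _ => ?_
    simp only [Fin.prod_univ_seven, tenTerm, vwp, wp]
    simp only [Matrix.cons_val]
    ring
  · intro k hk
    have hk' : n < k := by
      have := mt Finset.mem_range.2 hk; omega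
    simp only [Fin.prod_univ_seven]
    simp only [Matrix.cons_val]
    rw [sf_neg_eq_zero hodd hk']
    simp

end Bracket

/-- Bailey transformation formula (3.16) for terminating balanced `₁₀E₉`. -/
theorem bailey_transformation_10E9
    (f : ℂ → ℂ) (hf : f ≠ 0) (hodd : ∀ t : ℂ, f (-t) = -f t) (hdiff : Differentiable ℂ f)
    (hRiem : ∀ x y u v : ℂ,
      f (x + y) * f (x - y) * f (u + v) * f (u - v) =
        f (x + u) * f (x - u) * f (y + v) * f (y - v)
          - f (x + v) * f (x - v) * f (y + u) * f (y - u))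
    (δ : ℂ) (hδ : ∀ k : ℤ, k ≠ 0 → f ((k : ℂ) * δ) ≠ 0)
    (N : ℕ) (s c0 c1 c2 c3 d0 d1 d2 : ℂ)
    (hbal : c0 + c1 + c2 + c3 + d0 + d1 + d2 = 2 * δ + 3 * s)
    (hd2 : d2 = -(N : ℂ) * δ)
    (st : ℂ) (hst : st = d1 + d2 - d0)
    (dt0 : ℂ) (hdt0 : dt0 = d1 + d2 - s)
    (ct0 ct1 ct2 ct3 : ℂ) (hct0 : ct0 = δ + s - d0 - c0) (hct1 : ct1 = δ + s - d0 - c1)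
    (hct2 : ct2 = δ + s - d0 - c2) (hct3 : ct3 = δ + s - d0 - c3)
    (hs : f s ≠ 0) (hst' : f st ≠ 0)
    (h1 : ∀ (i : Fin 7) (l : ℕ), l < N →
      f (δ + s - ![c0, c1, c2, c3, d0, d1, d2] i + (l : ℂ) * δ) ≠ 0)
    (h2 : ∀ (i : Fin 7) (l : ℕ), l < N →
      f (δ + st - ![ct0, ct1, ct2, ct3, dt0, d1, d2] i + (l : ℂ) * δ) ≠ 0)
    (hd01 : ∀ l : ℕ, l < N → f (d0 - d1 + (l : ℂ) * δ) ≠ 0) :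
    E1 f δ s ![c0, c1, c2, c3, d0, d1, d2] =
      (sf f δ d0 N * sf f δ (δ + s) N / (sf f δ (d0 - d1) N * sf f δ (δ + s - d1) N))
        * (sf f δ (δ + s - c0 - d1) N / sf f δ (δ + s - c0) N)
        * (sf f δ (δ + s - c1 - d1) N / sf f δ (δ + s - c1) N)
        * (sf f δ (δ + s - c2 - d1) N / sf f δ (δ + s - c2) N)
        * (sf f δ (δ + s - c3 - d1) N / sf f δ (δ + s - c3) N)
        * E1 f δ st ![ct0, ct1, ct2, ct3, dt0, d1, d2] := by
  have hc : Continuous f := hdiff.continuous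
  have hbal' : c0 + c1 + c2 + c3 + d0 + d1 = ((N : ℂ) + 2) * δ + 3 * s := by
    rw [hd2] at hbal; linear_combination hbal
  subst hd2
  rw [E1_eq_tenSum hodd, E1_eq_tenSum hodd]
  have swap : tenSum f δ st ct0 ct1 dt0 ct2 ct3 d1 N = tenSum f δ st ct2 ct3 dt0 ct0 ct1 d1 N :=
    Finset.sum_congr rfl fun k _ => by unfold tenTerm; ring
  rw [swap]
  -- The parameters move along a complex line with direction `(s, c₀, c₁, c₂, c₃, d₀, d₁) =
  -- (2, 1, 1, 1, 0, -1, 4)`, which respects the balancing condition and on which no form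
  -- required to be nonzero is constant.
  let F : ℂ → ℂ := fun t => tenSum f δ (s + 2 * t) (c0 + 1 * t) (c1 + 1 * t) (d0 + (-1) * t)
    (c2 + 1 * t) (c3 + 0 * t) (d1 + 4 * t) N
  let Q : ℂ → ℂ := fun t => baileyFactor f δ (s + 2 * t) (c0 + 1 * t) (c1 + 1 * t) (c2 + 1 * t)
    (c3 + 0 * t) (d0 + (-1) * t) (d1 + 4 * t) N
  let G : ℂ → ℂ := fun t => tenSum f δ (st + 5 * t) (ct2 + 2 * t) (ct3 + 3 * t) (dt0 + 2 * t)
    (ct0 + 2 * t) (ct1 + 2 * t) (d1 + 4 * t) N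
  have hgen : ∀ᶠ t in residual ℂ, F t = Q t * G t := by
    filter_upwards [baileyGeneric_residual (δ := δ) hf hdiff (a := s)
        (l := δ + 2 * s - c0 - c1 - d0) (b := c0) (c := c1) (d := d0) (e := c2) (g := c3)
        (h := d1) (ra := 2) (rl := 3) (rb := 1) (rc := 1) (rd := -1) (re := 1) (rg := 0)
        (rh := 4) (by norm_num),
      baileyGeneric_residual (δ := δ) hf hdiff (a := st)
        (l := δ + 2 * s - c0 - c1 - d0) (b := ct2) (c := ct3) (d := dt0) (e := ct0) (g := ct1)
        (h := d1) (ra := 5) (rl := 3) (rb := 2) (rc := 3) (rd := 2) (re := 2) (rg := 2)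
        (rh := 4) (by norm_num)] with t g1 g2
    refine bailey_generic hodd hRiem hδ N ?_ ?_ ?_ ?_ ?_ ?_ ?_ ?_ g1 g2
    · linear_combination hbal'
    · ring
    · rw [hst]; ring
    · rw [hdt0]; ring
    · rw [hct0]; ring
    · rw [hct1]; ring
    · rw [hct2]; ring
    · rw [hct3]; ring
  have hF : ContinuousAt F 0 := by
    refine continuousAt_tenSum hδ hc (by fun_prop) (by fun_prop) (by fun_prop) (by fun_prop)
      (by fun_prop) (by fun_prop) (by fun_prop) (by simpa using hs) fun l hl => ?_
    have a0 := h1 0 l hl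
    have a1 := h1 1 l hl
    have a2 := h1 2 l hl
    have a3 := h1 3 l hl
    have a4 := h1 4 l hl
    have a5 := h1 5 l hl
    have a6 := h1 6 l hl
    simp only [Matrix.cons_val] at a0 a1 a2 a3 a4 a5 a6
    simp only [mul_zero, add_zero]
    exact ⟨a0, a1, a4, a2, a3, a5, a6⟩
  have hG : ContinuousAt G 0 := by
    refine continuousAt_tenSum hδ hc (by fun_prop) (by fun_prop) (by fun_prop) (by fun_prop)
      (by fun_prop) (by fun_prop) (by fun_prop) (by simpa using hst') fun l hl => ?_
    have a0 := h2 0 l hl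
    have a1 := h2 1 l hl
    have a2 := h2 2 l hl
    have a3 := h2 3 l hl
    have a4 := h2 4 l hl
    have a5 := h2 5 l hl
    have a6 := h2 6 l hl
    simp only [Matrix.cons_val] at a0 a1 a2 a3 a4 a5 a6
    simp only [mul_zero, add_zero]
    exact ⟨a2, a3, a4, a0, a1, a5, a6⟩
  have hQ : ContinuousAt Q 0 := by
    have q : ∀ g : ℂ → ℂ, Continuous g → ContinuousAt (fun t => sf f δ (g t) N) 0 :=
      fun g hg => (continuous_sf hc hg N).continuousAt
    have nz : ∀ x y : ℂ, (∀ l : ℕ, l < N → f (x + (l : ℂ) * δ) ≠ 0) → y = x → sf f δ y N ≠ 0 := by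
      rintro x y h rfl
      exact sf_ne_zero h
    have b0 := nz _ (δ + (s + 2 * 0) - (c0 + 1 * 0)) (fun l hl => h1 0 l hl) (by simp)
    have b1 := nz _ (δ + (s + 2 * 0) - (c1 + 1 * 0)) (fun l hl => h1 1 l hl) (by simp)
    have b2 := nz _ (δ + (s + 2 * 0) - (c2 + 1 * 0)) (fun l hl => h1 2 l hl) (by simp)
    have b3 := nz _ (δ + (s + 2 * 0) - (c3 + 0 * 0)) (fun l hl => h1 3 l hl) (by simp)
    have b4 := nz _ (δ + (s + 2 * 0) - (d1 + 4 * 0)) (fun l hl => h1 5 l hl) (by simp)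
    have b5 := nz _ ((d0 + (-1) * 0) - (d1 + 4 * 0)) hd01 (by simp)
    refine ((((((q _ (by fun_prop)).mul (q _ (by fun_prop))).div
      ((q _ (by fun_prop)).mul (q _ (by fun_prop))) (mul_ne_zero b5 b4)).mul
      ((q _ (by fun_prop)).div (q _ (by fun_prop)) b0)).mul
      ((q _ (by fun_prop)).div (q _ (by fun_prop)) b1)).mul
      ((q _ (by fun_prop)).div (q _ (by fun_prop)) b2)).mul
      ((q _ (by fun_prop)).div (q _ (by fun_prop)) b3)
  have h0 : F 0 = Q 0 * G 0 := by
    by_contra hne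
    have hcont : ContinuousAt (fun t => F t - Q t * G t) 0 := hF.sub (hQ.mul hG)
    have hev := hcont.eventually_ne (sub_ne_zero.2 hne)
    obtain ⟨t, ht1, ht2⟩ := (dense_of_mem_residual hgen).inter_nhds_nonempty hev
    exact ht2 (sub_eq_zero.2 ht1)
  simpa [F, Q, G, baileyFactor] using h0
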